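/- arXiv:1201.2739 — 2 statements merged into one kernel-verified Lean document; each statement's English description precedes it below -/
import Mathlib

section
/- Let k ≥ 2 be an integer and let n, ℓ be integers with n > k and k < ℓ ≤ n. For i ∈ ZMod n let B_i = {i, i+1, ..., i + ⌊n/k⌋ − 1} ⊆ ZMod n be the set of ⌊n/k⌋ consecutive residues starting at i. Then for every subset Y of ZMod n with card Y = ℓ there exists i ∈ ZMod n such that card (B_i ∩ Y) = ⌊ℓ/k⌋. -/
/-!
Write `w = n / k`, `m = #Y / k`, and let `f i` count the points of `Y` in the arc of length `w`
starting at `i`. The mean of `f` is `w * #Y / n`. With `r = n % k` and `s = #Y % k` one has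
`k * (n * m - w * #Y) = r * #Y - s * n`, which is less than `k * n` in absolute value, so the mean
is at distance less than `1` from `m`. Hence `f` takes a value `≤ m` and a value `≥ m`. Going once
around the cycle, `f` increases by at most `1` at each step, so it cannot jump over `m`.
-/

open Finset
open scoped Pointwise

theorem div_mul_lt_mul_div_add {k n : ℕ} (hk : 0 < k) (hn : 0 < n) (l : ℕ) :
    n / k * l < n * (l / k) + n := by
  refine Nat.lt_of_mul_lt_mul_left (a := k) ?_
  calc k * (n / k * l) = k * (n / k) * l := (mul_assoc ..).symm
    _ ≤ n * l := by gcongr; exact Nat.mul_div_le n k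
    _ < n * (k * (l / k + 1)) := by gcongr; exact Nat.lt_mul_div_succ l hk
    _ = k * (n * (l / k) + n) := by ring

theorem mul_div_lt_div_mul_add {k n l : ℕ} (hk : 0 < k) (hn : 0 < n) (hl : l ≤ n) :
    n * (l / k) < n / k * l + n := by
  have remainder_lt : n % k * l < k * n :=
    calc n % k * l ≤ n % k * n := by gcongr
      _ < k * n := by gcongr; exact Nat.mod_lt n hk
  refine Nat.lt_of_mul_lt_mul_left (a := k) ?_
  calc k * (n * (l / k)) = n * (k * (l / k)) := mul_left_comm ..
    _ ≤ n * l := by gcongr; exact Nat.mul_div_le l k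
    _ = (k * (n / k) + n % k) * l := by rw [Nat.div_add_mod]
    _ = k * (n / k * l) + n % k * l := by ring
    _ < k * (n / k * l) + k * n := by gcongr
    _ = k * (n / k * l + n) := (mul_add ..).symm

theorem sum_card_vadd_inter {G : Type*} [AddGroup G] [Fintype G] [DecidableEq G]
    (A B : Finset G) : ∑ x : G, #((x +ᵥ A) ∩ B) = #A * #B :=
  calc ∑ x : G, #((x +ᵥ A) ∩ B) = ∑ x : G, A.addConvolution (-B) (-x) := by
        simp only [card_vadd_inter]
    _ = ∑ x : G, A.addConvolution (-B) x := Equiv.sum_comp (Equiv.neg G) _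
    _ = #(A ×ˢ (-B)) := (card_eq_sum_card_fiberwise fun _ _ ↦ mem_univ _).symm
    _ = #A * #B := by rw [card_product, card_neg]

section CyclicFunctions

variable {n : ℕ} [NeZero n] {f : ZMod n → ℕ} {m : ℕ}

theorem exists_eq_of_le_of_le_of_add_one_le (hf : ∀ i, f (i + 1) ≤ f i + 1) {a b : ZMod n}
    (ha : f a ≤ m) (hb : m ≤ f b) : ∃ i, f i = m := by
  by_contra! hne
  have lt_of_walk (t : ℕ) : f (a + t) < m := by
    induction t with
    | zero => simpa using ha.lt_of_ne (hne a)
    | succ t ih =>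
      rw [Nat.cast_succ, ← add_assoc]
      exact ((hf _).trans ih).lt_of_ne (hne _)
  have lt_at_b := lt_of_walk (b - a).val
  rw [ZMod.natCast_zmod_val, add_sub_cancel] at lt_at_b
  exact hb.not_gt lt_at_b

theorem exists_eq_of_sum_lt_of_lt_sum (hf : ∀ i, f (i + 1) ≤ f i + 1)
    (sum_lt : ∑ i, f i < n * m + n) (lt_sum : n * m < ∑ i, f i + n) : ∃ i, f i = m := by
  obtain ⟨a, -, ha⟩ : ∃ a ∈ univ, f a < m + 1 :=
    exists_lt_of_sum_lt (by simpa [mul_add] using sum_lt)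
  obtain ⟨b, -, hb⟩ : ∃ b ∈ univ, m < f b + 1 :=
    exists_lt_of_sum_lt (by simpa [sum_add_distrib] using lt_sum)
  exact exists_eq_of_le_of_le_of_add_one_le hf (Nat.le_of_lt_succ ha) (Nat.le_of_lt_succ hb)

end CyclicFunctions

/-- The cyclic interval `{i, i + 1, …, i + w - 1}` of `ZMod n`, the block `B_i` when `w = n / k`.
It has `w` elements only when `w ≤ n` (or `n = 0`); longer arcs wrap around and cover `ZMod n`. -/
def arc {n : ℕ} (w : ℕ) (i : ZMod n) : Finset (ZMod n) :=
  (range w).image fun j : ℕ ↦ i + (j : ZMod n)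

namespace arc

variable {n w : ℕ}

theorem eq_vadd_arc_zero (w : ℕ) (i : ZMod n) : arc w i = i +ᵥ arc w 0 := by
  simp [arc, ← image_vadd, image_image, Function.comp_def]

theorem card_eq (hw : w ≤ n) (i : ZMod n) : #(arc w i) = w := by
  have cast_injOn : Set.InjOn ((↑) : ℕ → ZMod n) (range w) :=
    (CharP.natCast_injOn_Iio (ZMod n) n).mono fun j hj ↦ (mem_range.1 hj).trans_le hw
  exact (card_image_of_injOn ((add_right_injective i).comp_injOn cast_injOn)).trans (card_range w)

theorem add_one_subset_insert (w : ℕ) (i : ZMod n) :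
    arc w (i + 1) ⊆ insert (i + (w : ZMod n)) (arc w i) := by
  have arc_succ : insert (i + (w : ZMod n)) (arc w i) = arc (w + 1) i := by
    rw [arc, arc, range_add_one, image_insert]
  rw [arc_succ]
  refine image_subset_iff.2 fun j hj ↦ mem_image.2 ⟨j + 1, by simpa using hj, ?_⟩
  push_cast
  ring

theorem card_add_one_inter_le (w : ℕ) (i : ZMod n) (Y : Finset (ZMod n)) :
    #(arc w (i + 1) ∩ Y) ≤ #(arc w i ∩ Y) + 1 := by
  have inter_subset : arc w (i + 1) ∩ Y ⊆ insert (i + (w : ZMod n)) (arc w i ∩ Y) := by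
    grind [add_one_subset_insert w i]
  exact (card_le_card inter_subset).trans (card_insert_le _ _)

theorem sum_card_inter [NeZero n] (hw : w ≤ n) (Y : Finset (ZMod n)) :
    ∑ i, #(arc w i ∩ Y) = w * #Y :=
  calc ∑ i, #(arc w i ∩ Y) = ∑ i, #((i +ᵥ arc w 0) ∩ Y) :=
        sum_congr rfl fun i _ ↦ by rw [eq_vadd_arc_zero]
    _ = w * #Y := by rw [sum_card_vadd_inter, card_eq hw]

end arc

theorem stmt11_general {n k : ℕ} [NeZero n] (hk : 0 < k) (Y : Finset (ZMod n)) :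
    ∃ i, #(arc (n / k) i ∩ Y) = #Y / k := by
  have hn : 0 < n := NeZero.pos n
  have card_le : #Y ≤ n := by simpa using card_le_univ Y
  have sum_eq := arc.sum_card_inter (Nat.div_le_self n k) Y
  refine exists_eq_of_sum_lt_of_lt_sum (fun i ↦ arc.card_add_one_inter_le _ i Y) ?_ ?_
  · rw [sum_eq]
    exact div_mul_lt_mul_div_add hk hn #Y
  · rw [sum_eq]
    exact mul_div_lt_div_mul_add hk hn card_le

theorem stmt11 (k n ℓ : ℕ) (hk : 2 ≤ k) (hn : k < n) (hl1 : k < ℓ) (hl2 : ℓ ≤ n)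
    (Y : Finset (ZMod n)) (hY : Y.card = ℓ) :
    ∃ i : ZMod n,
      (((Finset.range (n / k)).image (fun (j : ℕ) => i + (j : ZMod n))) ∩ Y).card
        = ℓ / k := by
  have : NeZero n := ⟨Nat.ne_zero_of_lt hn⟩
  exact hY ▸ stmt11_general (Nat.zero_lt_of_lt hk) Y
end

section
/- There exist real constants c₁, c₂ > 0 such that for all positive integers n and ℓ with 4 ∣ n, 4 ∣ ℓ and 0 < ℓ < n, the central binomial-type estimate c₁ · (choose n ℓ)^(1/4) · (n / (ℓ·(n−ℓ)))^(3/8) ≤ choose (n/4) (ℓ/4) ≤ c₂ · (choose n ℓ)^(1/4) · (n / (ℓ·(n−ℓ)))^(3/8) holds, where choose a b denotes the binomial coefficient and the exponents 1/4 and 3/8 are real exponents (rpow) applied to the binomial coefficient and to the ratio viewed as real numbers. -/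
/-!
Write `n = k + j`. By Stirling, `n.choose k` lies within constant factors of
`M k j = √(n / (k j)) * n ^ n / (k ^ k * j ^ j)`. The second factor becomes its `d`-th power when
`k` and `j` are multiplied by `d`, while `n / (k j)` is divided by `d`, so `M k j` is *exactly*
`√d * M (d k) (d j) ^ (1 / d) * (d n / (d k * d j)) ^ ((1 - 1 / d) / 2)`. Replacing `M` by
binomial coefficients on both sides costs only constants.
-/

open Real Stirling
open scoped Nat

lemma stirlingSeq_pos {n : ℕ} (hn : n ≠ 0) : 0 < stirlingSeq n :=
  (sqrt_pos.2 pi_pos).trans_le (sqrt_pi_le_stirlingSeq hn)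

lemma stirlingSeq_le_stirlingSeq {m n : ℕ} (hm : m ≠ 0) (hmn : m ≤ n) :
    stirlingSeq n ≤ stirlingSeq m := by
  obtain ⟨m, rfl⟩ := Nat.exists_eq_succ_of_ne_zero hm
  obtain ⟨n, rfl⟩ := Nat.exists_eq_succ_of_ne_zero (by lia : n ≠ 0)
  exact stirlingSeq'_antitone (Nat.succ_le_succ_iff.1 hmn)

lemma stirlingSeq_le_exp_one_div_sqrt_two {n : ℕ} (hn : n ≠ 0) : stirlingSeq n ≤ exp 1 / √2 :=
  stirlingSeq_one ▸ stirlingSeq_le_stirlingSeq one_ne_zero (Nat.one_le_iff_ne_zero.2 hn)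

lemma factorial_eq_stirlingSeq_mul {n : ℕ} (hn : n ≠ 0) :
    (n ! : ℝ) = stirlingSeq n * (√(2 * n) * (n / exp 1) ^ n) := by
  rw [stirlingSeq, div_mul_cancel₀ _ (by positivity)]

/-- The exponential of `k + j` times the Shannon entropy (in nats) of the distribution
`(k / (k + j), j / (k + j))`: the exponential factor in Stirling's approximation to
`(k + j).choose k`. -/
noncomputable def entropyFactor (k j : ℕ) : ℝ :=
  ((k + j : ℕ) : ℝ) ^ (k + j) / ((k : ℝ) ^ k * (j : ℝ) ^ j)

lemma entropyFactor_pos (k j : ℕ) : 0 < entropyFactor k j := by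
  have pow_self_pos (m : ℕ) : (0 : ℝ) < (m : ℝ) ^ m := by exact_mod_cast Nat.pow_self_pos
  exact div_pos (pow_self_pos _) (mul_pos (pow_self_pos k) (pow_self_pos j))

lemma entropyFactor_mul_mul (d k j : ℕ) :
    entropyFactor (d * k) (d * j) = entropyFactor k j ^ d := by
  rcases eq_or_ne d 0 with rfl | hd
  · simp [entropyFactor]
  simp only [entropyFactor, ← mul_add, Nat.cast_mul, mul_pow, div_pow, ← pow_mul, mul_comm _ d]
  rw [mul_mul_mul_comm, ← pow_add, ← mul_add, mul_div_mul_left _ _ (by positivity)]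

/-- Stirling's approximation to `(k + j).choose k`, without its constant `1 / √(2π)`. The two parts
`k` and `j` are the arguments so that no subtraction occurs. -/
noncomputable def chooseMainTerm (k j : ℕ) : ℝ :=
  √(((k + j : ℕ) : ℝ) / (k * j)) * entropyFactor k j

section Bounds

variable {k j : ℕ} (hk : k ≠ 0) (hj : j ≠ 0)
include hk hj

lemma chooseMainTerm_pos : 0 < chooseMainTerm k j :=
  mul_pos (sqrt_pos.2 (by positivity)) (entropyFactor_pos k j)

lemma choose_eq_stirlingSeq_mul_chooseMainTerm :
    ((k + j).choose k : ℝ) =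
      stirlingSeq (k + j) / (stirlingSeq k * stirlingSeq j * √2) * chooseMainTerm k j := by
  have hSk := (stirlingSeq_pos hk).ne'
  have hSj := (stirlingSeq_pos hj).ne'
  rw [Nat.cast_add_choose, factorial_eq_stirlingSeq_mul (by lia : k + j ≠ 0),
    factorial_eq_stirlingSeq_mul hk, factorial_eq_stirlingSeq_mul hj, chooseMainTerm,
    entropyFactor, sqrt_div (by positivity), sqrt_mul k.cast_nonneg]
  simp only [sqrt_mul zero_le_two, div_pow, pow_add (exp 1)]
  field_simp

lemma mul_chooseMainTerm_le_choose :
    √(2 * π) / exp 2 * chooseMainTerm k j ≤ (k + j).choose k := by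
  rw [choose_eq_stirlingSeq_mul_chooseMainTerm hk hj]
  have hSk := stirlingSeq_pos hk
  have hSj := stirlingSeq_pos hj
  refine mul_le_mul_of_nonneg_right ?_ (chooseMainTerm_pos hk hj).le
  calc √(2 * π) / exp 2 = √π / (exp 1 / √2 * (exp 1 / √2) * √2) := by
        rw [sqrt_mul zero_le_two, ← one_add_one_eq_two, exp_add]
        field_simp
    _ ≤ stirlingSeq (k + j) / (stirlingSeq k * stirlingSeq j * √2) := by
        gcongr
        · exact (stirlingSeq_pos (by lia)).le
        · exact sqrt_pi_le_stirlingSeq (by lia)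
        · exact stirlingSeq_le_exp_one_div_sqrt_two hk
        · exact stirlingSeq_le_exp_one_div_sqrt_two hj

lemma choose_le_mul_chooseMainTerm :
    ((k + j).choose k : ℝ) ≤ (√(2 * π))⁻¹ * chooseMainTerm k j := by
  rw [choose_eq_stirlingSeq_mul_chooseMainTerm hk hj]
  have hSk := stirlingSeq_pos hk
  refine mul_le_mul_of_nonneg_right ?_ (chooseMainTerm_pos hk hj).le
  calc stirlingSeq (k + j) / (stirlingSeq k * stirlingSeq j * √2)
      ≤ stirlingSeq k / (stirlingSeq k * √π * √2) := by
        gcongr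
        · exact stirlingSeq_le_stirlingSeq hk (Nat.le_add_right k j)
        · exact sqrt_pi_le_stirlingSeq hj
    _ = (√(2 * π))⁻¹ := by
        rw [sqrt_mul zero_le_two]
        field_simp

end Bounds

section Scaling

variable {d k j : ℕ} (hd : d ≠ 0) (hk : k ≠ 0) (hj : j ≠ 0)
include hd hk hj

lemma chooseMainTerm_eq_sqrt_mul_rpow :
    chooseMainTerm k j = √d * chooseMainTerm (d * k) (d * j) ^ (1 / d : ℝ) *
      (((d * k + d * j : ℕ) : ℝ) / ((d * k : ℕ) * (d * j : ℕ))) ^ ((1 - 1 / d : ℝ) / 2) := by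
  have hE := entropyFactor_pos k j
  unfold chooseMainTerm
  set ratio : ℝ := ((d * k + d * j : ℕ) : ℝ) / ((d * k : ℕ) * (d * j : ℕ)) with ratio_def
  have ratio_pos : 0 < ratio := by positivity
  have unscaled_ratio : ((k + j : ℕ) : ℝ) / (k * j) = d * ratio := by
    rw [ratio_def]
    push_cast
    field_simp
  have root_entropyFactor : (entropyFactor k j ^ d) ^ (1 / d : ℝ) = entropyFactor k j := by
    rw [one_div, pow_rpow_inv_natCast hE.le hd]
  have ratio_exponents :
      √ratio ^ (1 / d : ℝ) * ratio ^ ((1 - 1 / d : ℝ) / 2) = √ratio := by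
    rw [sqrt_eq_rpow, ← rpow_mul ratio_pos.le, ← rpow_add ratio_pos]
    ring_nf
  calc √(((k + j : ℕ) : ℝ) / (k * j)) * entropyFactor k j
      = √d * √ratio * entropyFactor k j := by rw [unscaled_ratio, sqrt_mul (by positivity)]
    _ = √d * (√ratio ^ (1 / d : ℝ) * entropyFactor k j) * ratio ^ ((1 - 1 / d : ℝ) / 2) := by
        linear_combination -(√d * entropyFactor k j) * ratio_exponents
    _ = _ := by
        rw [entropyFactor_mul_mul, mul_rpow (by positivity) (by positivity), root_entropyFactor]

lemma mul_choose_mul_rpow_le_choose :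
    √(2 * π) / exp 2 * √d / (√(2 * π))⁻¹ ^ (1 / d : ℝ) *
        ((d * k + d * j).choose (d * k) : ℝ) ^ (1 / d : ℝ) *
        (((d * k + d * j : ℕ) : ℝ) / ((d * k : ℕ) * (d * j : ℕ))) ^ ((1 - 1 / d : ℝ) / 2) ≤
      (k + j).choose k := by
  have hroot : ((d * k + d * j).choose (d * k) : ℝ) ^ (1 / d : ℝ) ≤
      (√(2 * π))⁻¹ ^ (1 / d : ℝ) * chooseMainTerm (d * k) (d * j) ^ (1 / d : ℝ) := by
    have hM := chooseMainTerm_pos (mul_ne_zero hd hk) (mul_ne_zero hd hj)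
    rw [← mul_rpow (by positivity) hM.le]
    gcongr
    exact choose_le_mul_chooseMainTerm (mul_ne_zero hd hk) (mul_ne_zero hd hj)
  refine le_trans ?_ (mul_chooseMainTerm_le_choose hk hj)
  rw [chooseMainTerm_eq_sqrt_mul_rpow hd hk hj, ← mul_assoc, ← mul_assoc]
  gcongr ?_ * _
  rwa [div_mul_eq_mul_div, div_le_iff₀' (by positivity), mul_left_comm,
    mul_le_mul_iff_right₀ (by positivity)]

lemma choose_le_mul_choose_mul_rpow :
    ((k + j).choose k : ℝ) ≤
      (√(2 * π))⁻¹ * √d / (√(2 * π) / exp 2) ^ (1 / d : ℝ) *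
        ((d * k + d * j).choose (d * k) : ℝ) ^ (1 / d : ℝ) *
        (((d * k + d * j : ℕ) : ℝ) / ((d * k : ℕ) * (d * j : ℕ))) ^ ((1 - 1 / d : ℝ) / 2) := by
  have hroot : (√(2 * π) / exp 2) ^ (1 / d : ℝ) * chooseMainTerm (d * k) (d * j) ^ (1 / d : ℝ) ≤
      ((d * k + d * j).choose (d * k) : ℝ) ^ (1 / d : ℝ) := by
    have hM := chooseMainTerm_pos (mul_ne_zero hd hk) (mul_ne_zero hd hj)
    rw [← mul_rpow (by positivity) hM.le]
    gcongr
    exact mul_chooseMainTerm_le_choose (mul_ne_zero hd hk) (mul_ne_zero hd hj)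
  refine (choose_le_mul_chooseMainTerm hk hj).trans ?_
  rw [chooseMainTerm_eq_sqrt_mul_rpow hd hk hj, ← mul_assoc, ← mul_assoc]
  gcongr ?_ * _
  rwa [div_mul_eq_mul_div, le_div_iff₀' (by positivity), mul_left_comm,
    mul_le_mul_iff_right₀ (by positivity)]

end Scaling

theorem stmt13_general {d : ℕ} (hd : d ≠ 0) :
    ∃ c₁ c₂ : ℝ, 0 < c₁ ∧ 0 < c₂ ∧
      ∀ n ℓ : ℕ, d ∣ n → d ∣ ℓ → 0 < ℓ → ℓ < n →
        c₁ * (n.choose ℓ : ℝ) ^ (1 / d : ℝ) *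
            ((n : ℝ) / (ℓ * ((n : ℝ) - ℓ))) ^ ((1 - 1 / d : ℝ) / 2)
          ≤ ((n / d).choose (ℓ / d) : ℝ) ∧
        ((n / d).choose (ℓ / d) : ℝ)
          ≤ c₂ * (n.choose ℓ : ℝ) ^ (1 / d : ℝ) *
            ((n : ℝ) / (ℓ * ((n : ℝ) - ℓ))) ^ ((1 - 1 / d : ℝ) / 2) := by
  refine ⟨√(2 * π) / exp 2 * √d / (√(2 * π))⁻¹ ^ (1 / d : ℝ),
    (√(2 * π))⁻¹ * √d / (√(2 * π) / exp 2) ^ (1 / d : ℝ), by positivity, by positivity, ?_⟩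
  rintro _ _ ⟨m, rfl⟩ ⟨k, rfl⟩ hℓ hlt
  have hk : k ≠ 0 := (Nat.pos_of_mul_pos_left hℓ).ne'
  obtain ⟨j, rfl⟩ := Nat.exists_eq_add_of_lt (Nat.lt_of_mul_lt_mul_left hlt)
  have sub_eq : ((d * (k + (j + 1)) : ℕ) : ℝ) - (d * k : ℕ) = (d * (j + 1) : ℕ) := by
    push_cast
    ring
  rw [add_assoc, sub_eq, Nat.mul_div_cancel_left _ hd.pos, Nat.mul_div_cancel_left _ hd.pos,
    mul_add d k]
  exact ⟨mul_choose_mul_rpow_le_choose hd hk j.succ_ne_zero,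
    choose_le_mul_choose_mul_rpow hd hk j.succ_ne_zero⟩

theorem stmt13 :
    ∃ c₁ c₂ : ℝ, 0 < c₁ ∧ 0 < c₂ ∧
      ∀ n ℓ : ℕ, 4 ∣ n → 4 ∣ ℓ → 0 < ℓ → ℓ < n →
        c₁ * ((n.choose ℓ : ℝ) ^ ((1 : ℝ) / 4)) *
            (((n : ℝ) / ((ℓ : ℝ) * ((n : ℝ) - (ℓ : ℝ)))) ^ ((3 : ℝ) / 8))
          ≤ ((n / 4).choose (ℓ / 4) : ℝ) ∧
        ((n / 4).choose (ℓ / 4) : ℝ)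
          ≤ c₂ * ((n.choose ℓ : ℝ) ^ ((1 : ℝ) / 4)) *
            (((n : ℝ) / ((ℓ : ℝ) * ((n : ℝ) - (ℓ : ℝ)))) ^ ((3 : ℝ) / 8)) := by
  have exponent_eq : (1 - 1 / 4 : ℝ) / 2 = 3 / 8 := by norm_num
  simpa only [exponent_eq, Nat.cast_ofNat] using stmt13_general four_ne_zero
end
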